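/- For every strictly increasing sequence of positive integers 𝒥 = (j_m)_{m≥1} and every ξ ≥ 1, the Hausdorff dimension with respect to the gauge distance of the sets S_ξ(𝒥) and S̃_ξ(𝒥) satisfies dim_H S̃_ξ(𝒥) = dim_H S_ξ(𝒥) = 4/ξ. -/

import Mathlib

noncomputable section

open MeasureTheory

/-- The underlying space of the Heisenberg group: `ℝ³`. -/
abbrev H3 : Type := ℝ × ℝ × ℝ

/-- The Heisenberg group law `(p,q,r)∗(p',q',r') = (p+p', q+q', r+r'+2(qp'−pq'))`. -/
def Hmul (x y : H3) : H3 :=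
  (x.1 + y.1, x.2.1 + y.2.1, x.2.2 + y.2.2 + 2 * (x.2.1 * y.1 - x.1 * y.2.1))

/-- The inverse for the Heisenberg group law. -/
def Hinv (x : H3) : H3 := (-x.1, -x.2.1, -x.2.2)

/-- The homogeneous (gauge) norm `‖(p,q,r)‖ = ((p²+q²)²+r²)^(1/4)`. -/
def Hnorm (x : H3) : ℝ := ((x.1 ^ 2 + x.2.1 ^ 2) ^ 2 + x.2.2 ^ 2) ^ ((1 : ℝ) / 4)

/-- The gauge distance `δ(x,y) = ‖x⁻¹∗y‖`. -/
def Hdist (x y : H3) : ℝ := Hnorm (Hmul (Hinv x) y)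

/-- The gauge ball `B(x,r)`. -/
def Hball (x : H3) (r : ℝ) : Set H3 := {y | Hdist x y < r}

/-- The dilation `λ∘(p,q,r) = (λp, λq, λ²r)`. -/
def Hdil (l : ℝ) (x : H3) : H3 := (l * x.1, l * x.2.1, l ^ 2 * x.2.2)

/-- A lattice point of `ℤ³` seen inside `ℝ³`. -/
def latticePt (k : ℤ × ℤ × ℤ) : H3 := ((k.1 : ℝ), (k.2.1 : ℝ), (k.2.2 : ℝ))

/-- The dyadic point `x_{j,k} = 2^{−j}∘k`. -/
def xjk (j : ℤ) (k : ℤ × ℤ × ℤ) : H3 := Hdil ((2 : ℝ) ^ (-j)) (latticePt k)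

open scoped ENNReal

/-- The diameter of a set for the gauge distance. -/
def gaugeDiam (E : Set H3) : ℝ := sSup {d : ℝ | ∃ x ∈ E, ∃ y ∈ E, d = Hdist x y}

/-- The Hausdorff premeasure `H^d_η` for the gauge distance: infimum of `Σ |Bᵢ|^d` over all
countable coverings by gauge balls of radius less than `η`. -/
def gaugeHausdorffPre (d η : ℝ) (E : Set H3) : ℝ≥0∞ :=
  ⨅ (c : ℕ → H3) (r : ℕ → ℝ)
    (_ : (∀ n, 0 < r n ∧ r n < η) ∧ E ⊆ ⋃ n, Hball (c n) (r n)),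
      ∑' n, ENNReal.ofReal (gaugeDiam (Hball (c n) (r n)) ^ d)

/-- The Hausdorff measure `H^d = lim_{η→0⁺} H^d_η` for the gauge distance (the limit of the
monotone family being its supremum). -/
def gaugeHausdorff (d : ℝ) (E : Set H3) : ℝ≥0∞ :=
  ⨆ (η : ℝ) (_ : 0 < η), gaugeHausdorffPre d η E

/-- The Hausdorff dimension for the gauge distance: `dim_H E = inf{d > 0 : H^d(E) = 0}`. -/
def gaugeDimH (E : Set H3) : ℝ := sInf {d : ℝ | 0 < d ∧ gaugeHausdorff d E = 0}

/-- The unit cube `[0,1)³`. -/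
def C0 : Set H3 :=
  {x : H3 | (0 ≤ x.1 ∧ x.1 < 1) ∧ (0 ≤ x.2.1 ∧ x.2.1 < 1) ∧ (0 ≤ x.2.2 ∧ x.2.2 < 1)}

/-- `x` is `ξ`-approximable with respect to the sequence `𝒥 = (j_m)`: the inequality
`δ(x, x_{j_m,k}) ≤ C·2^{−j_m ξ}` holds for infinitely many pairs `(m,k)`. -/
def Approximable (C : ℝ) (J : ℕ → ℕ) (ξ : ℝ) (x : H3) : Prop :=
  {mk : ℕ × (ℤ × ℤ × ℤ) |
    Hdist x (xjk (J mk.1 : ℤ) mk.2) ≤ C * (2 : ℝ) ^ (-(J mk.1 : ℝ) * ξ)}.Infinite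

/-- `S_ξ(𝒥)`: the set of `ξ`-approximable points of `[0,1)³`. -/
def SXi (C : ℝ) (J : ℕ → ℕ) (ξ : ℝ) : Set H3 := {x ∈ C0 | Approximable C J ξ x}

/-- The approximation rate `ξ_x(𝒥) = sup{ξ > 0 : x is ξ-approximable w.r.t. 𝒥}`. -/
def approxRate (C : ℝ) (J : ℕ → ℕ) (x : H3) : ℝ :=
  sSup {ξ : ℝ | 0 < ξ ∧ Approximable C J ξ x}

/-- `S̃_ξ(𝒥)`: the set of points of `[0,1)³` with approximation rate exactly `ξ`. -/
def SXiTilde (C : ℝ) (J : ℕ → ℕ) (ξ : ℝ) : Set H3 := {x ∈ C0 | approxRate C J x = ξ}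


lemma Hnorm_nonneg (x : H3) : 0 ≤ Hnorm x := by unfold Hnorm; positivity

lemma Hnorm_pow (x : H3) : Hnorm x ^ 4 = (x.1 ^ 2 + x.2.1 ^ 2) ^ 2 + x.2.2 ^ 2 := by
  unfold Hnorm
  rw [← Real.rpow_natCast, ← Real.rpow_mul (by positivity)]
  norm_num

lemma abs_fst_le {x : H3} {R : ℝ} (h : Hnorm x ≤ R) : |x.1| ≤ R := by
  have h0 := Hnorm_nonneg x
  have h1 : Hnorm x ^ 4 ≤ R ^ 4 := pow_le_pow_left₀ h0 h 4
  rw [Hnorm_pow] at h1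
  have h2 : |x.1| ^ 4 ≤ R ^ 4 := by
    have : |x.1| ^ 4 = (x.1 ^ 2) ^ 2 := by rw [← sq_abs x.1]; ring
    rw [this]
    nlinarith [sq_nonneg x.1, sq_nonneg x.2.1, sq_nonneg x.2.2, mul_nonneg (sq_nonneg x.1) (sq_nonneg x.2.1)]
  exact le_of_pow_le_pow_left₀ (by norm_num) (h0.trans h) h2

lemma abs_snd_le {x : H3} {R : ℝ} (h : Hnorm x ≤ R) : |x.2.1| ≤ R := by
  have : Hnorm (x.2.1, x.1, x.2.2) ≤ R := by
    convert h using 1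
    unfold Hnorm; simp only; rw [add_comm (x.2.1 ^ 2)]
  exact abs_fst_le this

lemma abs_trd_le {x : H3} {R : ℝ} (h : Hnorm x ≤ R) : |x.2.2| ≤ R ^ 2 := by
  have h0 := Hnorm_nonneg x
  have h1 : Hnorm x ^ 4 ≤ R ^ 4 := pow_le_pow_left₀ h0 h 4
  rw [Hnorm_pow] at h1
  apply abs_le_of_sq_le_sq _ (by positivity)
  nlinarith [sq_nonneg (x.1 ^ 2 + x.2.1 ^ 2)]

lemma Hnorm_le_four {x : H3} {R : ℝ} (h1 : |x.1| ≤ 2 * R) (h2 : |x.2.1| ≤ 2 * R)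
    (h3 : |x.2.2| ≤ 8 * R ^ 2) : Hnorm x ≤ 4 * R := by
  have hR : 0 ≤ R := by linarith [abs_nonneg x.1]
  have e1 : x.1 ^ 2 ≤ 4 * R ^ 2 := by
    have := sq_le_sq' (abs_le.1 h1).1 (abs_le.1 h1).2; linarith
  have e2 : x.2.1 ^ 2 ≤ 4 * R ^ 2 := by
    have := sq_le_sq' (abs_le.1 h2).1 (abs_le.1 h2).2; linarith
  have e3 : x.2.2 ^ 2 ≤ (8 * R ^ 2) ^ 2 := sq_le_sq' (abs_le.1 h3).1 (abs_le.1 h3).2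
  have e4 : (x.1 ^ 2 + x.2.1 ^ 2) ^ 2 ≤ (8 * R ^ 2) ^ 2 :=
    pow_le_pow_left₀ (by positivity) (by linarith) 2
  apply le_of_pow_le_pow_left₀ (n := 4) (by norm_num) (by positivity)
  rw [Hnorm_pow]
  nlinarith [pow_nonneg hR 4]

lemma Hdist_comm (x y : H3) : Hdist x y = Hdist y x := by
  unfold Hdist Hnorm Hmul Hinv
  congr 1
  simp only
  ring

lemma Hdist_le_of_ball {c x y : H3} {r : ℝ} (hx : Hdist c x ≤ r) (hy : Hdist c y ≤ r) :
    Hdist x y ≤ 4 * r := by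
  have a1 := abs_fst_le hx
  have a2 := abs_snd_le hx
  have a3 := abs_trd_le hx
  have b1 := abs_fst_le hy
  have b2 := abs_snd_le hy
  have b3 := abs_trd_le hy
  have hr : 0 ≤ r := (abs_nonneg _).trans a1
  set a := Hmul (Hinv c) x with ha
  set b := Hmul (Hinv c) y with hb
  have key : Hmul (Hinv x) y = (b.1 - a.1, b.2.1 - a.2.1,
      b.2.2 - a.2.2 + 2 * (a.1 * b.2.1 - a.2.1 * b.1)) := by
    simp only [ha, hb, Hmul, Hinv]
    refine Prod.ext ?_ (Prod.ext ?_ ?_) <;> simp only <;> ring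
  have m1 : |a.1 * b.2.1| ≤ r * r := by
    rw [abs_mul]; exact mul_le_mul a1 b2 (abs_nonneg _) hr
  have m2 : |a.2.1 * b.1| ≤ r * r := by
    rw [abs_mul]; exact mul_le_mul a2 b1 (abs_nonneg _) hr
  rw [abs_le] at *
  unfold Hdist
  rw [key]
  apply Hnorm_le_four <;> simp only <;> rw [abs_le] <;> constructor <;> nlinarith

lemma gaugeDiam_bdd (c : H3) (r : ℝ) :
    ∀ d ∈ {d : ℝ | ∃ x ∈ Hball c r, ∃ y ∈ Hball c r, d = Hdist x y}, d ≤ 4 * r := by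
  rintro d ⟨x, hx, y, hy, rfl⟩
  exact Hdist_le_of_ball (le_of_lt hx) (le_of_lt hy)

lemma Hdist_self (c : H3) : Hdist c c = 0 := by
  have : Hdist c c ^ 4 = 0 := by
    unfold Hdist; rw [Hnorm_pow]; simp only [Hmul, Hinv]; ring
  exact pow_eq_zero_iff (by norm_num) |>.1 this

lemma gaugeDiam_le {c : H3} {r : ℝ} (hr : 0 < r) : gaugeDiam (Hball c r) ≤ 4 * r := by
  unfold gaugeDiam
  apply csSup_le _ (gaugeDiam_bdd c r)
  exact ⟨_, c, by simpa [Hball, Hdist_self] using hr, c, by simpa [Hball, Hdist_self] using hr, rfl⟩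

lemma le_gaugeDiam {c : H3} {r : ℝ} (hr : 0 < r) : r ≤ gaugeDiam (Hball c r) := by
  apply le_of_forall_lt
  intro t ht
  wlog ht0 : 0 ≤ t generalizing t
  · exact (not_le.1 ht0).trans (this 0 hr le_rfl)
  obtain ⟨s, hts, hsr⟩ := exists_between ht
  have hs : 0 ≤ s := ht0.trans hts.le
  have hd : Hdist c (Hmul c (s, 0, 0)) = s := by
    have h4 : Hdist c (Hmul c (s, 0, 0)) ^ 4 = s ^ 4 := by
      unfold Hdist; rw [Hnorm_pow]; simp only [Hmul, Hinv]; ring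
    exact (pow_left_inj₀ (Hnorm_nonneg _) hs (by norm_num)).1 h4
  refine hts.trans_le (le_csSup ⟨_, gaugeDiam_bdd c r⟩ ?_)
  exact ⟨c, by simpa [Hball, Hdist_self] using hr, _, by simpa [Hball, hd] using hsr, hd.symm⟩

lemma gaugeHausdorff_mono (d : ℝ) {E F : Set H3} (h : E ⊆ F) :
    gaugeHausdorff d E ≤ gaugeHausdorff d F := by
  unfold gaugeHausdorff gaugeHausdorffPre
  refine iSup₂_mono fun η hη => ?_
  refine le_iInf fun c => le_iInf fun r => le_iInf fun hc => ?_
  exact iInf_le_of_le c (iInf_le_of_le r (iInf_le_of_le ⟨hc.1, h.trans hc.2⟩ le_rfl))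

/-- Covers indexed by a denumerable type, allowing radius zero. -/
lemma gaugeHausdorff_zero_of_cover {ι : Type*} [Denumerable ι] {d : ℝ} (hd : 0 < d) {E : Set H3}
    (h : ∀ η > 0, ∀ ε : ℝ≥0∞, 0 < ε → ∃ (c : ι → H3) (r : ι → ℝ), (∀ i, 0 ≤ r i ∧ r i < η) ∧
      E ⊆ ⋃ i, Hball (c i) (r i) ∧ ∑' i, ENNReal.ofReal ((4 * r i) ^ d) ≤ ε) :
    gaugeHausdorff d E = 0 := by
  unfold gaugeHausdorff
  simp only [ENNReal.iSup_eq_zero]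
  intro η hη
  apply le_antisymm _ zero_le
  apply le_of_forall_pos_le_add
  intro ε hε
  obtain ⟨c, r, hr, hE, hs⟩ := h η hη (ε / 2) (ENNReal.half_pos hε.ne')
  obtain ⟨τ, hτ0, hτ⟩ := ENNReal.exists_pos_sum_of_countable (ENNReal.half_pos hε.ne').ne' ι
  let r' : ι → ℝ := fun i => if r i = 0 then min (η / 2) ((τ i : ℝ) ^ (1 / d) / 4) else r i
  have hτ' : ∀ i, (0 : ℝ) < τ i := fun i => by exact_mod_cast hτ0 i
  have hr' : ∀ i, 0 < r' i ∧ r' i < η := by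
    intro i
    simp only [r']
    split_ifs with h0
    · have : 0 < (τ i : ℝ) ^ (1 / d) := Real.rpow_pos_of_pos (hτ' i) _
      exact ⟨lt_min (by linarith) (by linarith), (min_le_left _ _).trans_lt (by linarith)⟩
    · exact ⟨lt_of_le_of_ne (hr i).1 (Ne.symm h0), (hr i).2⟩
  have hcov : E ⊆ ⋃ i, Hball (c i) (r' i) := by
    intro x hx
    obtain ⟨i, hi⟩ := Set.mem_iUnion.1 (hE hx)
    have hi' : Hdist (c i) x < r i := hi
    have : r i ≠ 0 := by
      have := Hnorm_nonneg (Hmul (Hinv (c i)) x)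
      exact (lt_of_le_of_lt this hi').ne'
    exact Set.mem_iUnion.2 ⟨i, by simpa [Hball, r', this] using hi'⟩
  let e := Denumerable.eqv ι
  have hb : ∀ i, ENNReal.ofReal (gaugeDiam (Hball (c i) (r' i)) ^ d)
      ≤ ENNReal.ofReal ((4 * r i) ^ d) + τ i := by
    intro i
    have h1 : gaugeDiam (Hball (c i) (r' i)) ^ d ≤ (4 * r' i) ^ d :=
      Real.rpow_le_rpow ((hr' i).1.le.trans (le_gaugeDiam (hr' i).1)) (gaugeDiam_le (hr' i).1) hd.le
    refine (ENNReal.ofReal_le_ofReal h1).trans ?_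
    by_cases h0 : r i = 0
    · refine le_trans ?_ le_add_self
      have : (4 * r' i) ^ d ≤ τ i := by
        have h2 : 4 * r' i ≤ (τ i : ℝ) ^ (1 / d) := by
          have : r' i ≤ (τ i : ℝ) ^ (1 / d) / 4 := by simp only [r', h0, if_true]; exact min_le_right _ _
          linarith
        calc (4 * r' i) ^ d ≤ ((τ i : ℝ) ^ (1 / d)) ^ d :=
              Real.rpow_le_rpow (by linarith [(hr' i).1]) h2 hd.le
          _ = τ i := by rw [← Real.rpow_mul (hτ' i).le]; simp [hd.ne']
      refine (ENNReal.ofReal_le_ofReal this).trans ?_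
      simp
    · have : r' i = r i := by simp [r', h0]
      rw [this]; exact le_self_add
  unfold gaugeHausdorffPre
  refine iInf_le_of_le (fun n => c (e.symm n)) (iInf_le_of_le (fun n => r' (e.symm n))
    (iInf_le_of_le ⟨fun n => hr' _, ?_⟩ ?_))
  · intro x hx
    obtain ⟨i, hi⟩ := Set.mem_iUnion.1 (hcov hx)
    exact Set.mem_iUnion.2 ⟨e i, by simpa using hi⟩
  · rw [Equiv.tsum_eq e.symm (fun i => ENNReal.ofReal (gaugeDiam (Hball (c i) (r' i)) ^ d))]
    calc _ ≤ ∑' i, (ENNReal.ofReal ((4 * r i) ^ d) + τ i) := ENNReal.tsum_le_tsum hb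
      _ = ∑' i, ENNReal.ofReal ((4 * r i) ^ d) + ∑' i, (τ i : ℝ≥0∞) := ENNReal.tsum_add
      _ ≤ ε / 2 + ε / 2 := add_le_add hs hτ.le
      _ = 0 + ε := by rw [ENNReal.add_halves, zero_add]

/-- Mass distribution principle. -/
lemma mass_distribution {Ω : Type*} [MeasurableSpace Ω] (P : Measure Ω) (Φ : Ω → H3) {d K : ℝ}
    (hd : 0 < d)
    (hball : ∀ c r, 0 < r → P (Φ ⁻¹' (Hball c r)) ≤ ENNReal.ofReal (K * r ^ d))
    {E : Set H3} (hE : gaugeHausdorff d E = 0) : P (Φ ⁻¹' E) = 0 := by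
  have h1 : P (Φ ⁻¹' E) / ENNReal.ofReal K ≤ gaugeHausdorffPre d 1 E := by
    unfold gaugeHausdorffPre
    refine le_iInf fun c => le_iInf fun r => le_iInf fun hc => ?_
    apply ENNReal.div_le_of_le_mul
    rw [← ENNReal.tsum_mul_right]
    calc P (Φ ⁻¹' E) ≤ P (⋃ n, Φ ⁻¹' (Hball (c n) (r n))) := by
          apply measure_mono
          rw [← Set.preimage_iUnion]
          exact Set.preimage_mono hc.2
      _ ≤ ∑' n, P (Φ ⁻¹' (Hball (c n) (r n))) := measure_iUnion_le _
      _ ≤ _ := by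
          apply ENNReal.tsum_le_tsum
          intro n
          have hr := (hc.1 n).1
          refine (hball _ _ hr).trans ?_
          rw [mul_comm, ENNReal.ofReal_mul (by positivity)]
          gcongr
          exact le_gaugeDiam hr
  have h2 : gaugeHausdorffPre d 1 E = 0 := by
    apply le_antisymm _ zero_le
    rw [← hE]
    exact le_iSup₂_of_le (f := fun (η : ℝ) (_ : 0 < η) => gaugeHausdorffPre d η E) 1 one_pos le_rfl
  rw [h2, nonpos_iff_eq_zero, ENNReal.div_eq_zero_iff] at h1
  exact h1.resolve_right ENNReal.ofReal_ne_top

/-- The finite box of indices relevant at level `j`. -/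
def kbox (R j : ℕ) : Finset (ℤ × ℤ × ℤ) :=
  Finset.Icc (-(R * 2 ^ j : ℤ)) (R * 2 ^ j) ×ˢ
    (Finset.Icc (-(R * 2 ^ j : ℤ)) (R * 2 ^ j) ×ˢ Finset.Icc (-(R * 4 ^ j : ℤ)) (R * 4 ^ j))

lemma kbox_card {R : ℕ} (hR : 1 ≤ R) (j : ℕ) :
    ((kbox R j).card : ℝ) ≤ (3 * R) ^ 3 * 2 ^ (4 * j) := by
  have key : ∀ N : ℕ, 1 ≤ N → ((Finset.Icc (-(N : ℤ)) N).card : ℝ) ≤ 3 * N := by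
    intro N hN
    rw [Int.card_Icc]
    have : ((N : ℤ) + 1 - -(N : ℤ)).toNat ≤ 3 * N := by omega
    exact_mod_cast this
  have k1 := key (R * 2 ^ j) (Nat.one_le_iff_ne_zero.2 (by positivity))
  have k2 := key (R * 4 ^ j) (Nat.one_le_iff_ne_zero.2 (by positivity))
  push_cast at k1 k2
  unfold kbox
  rw [Finset.card_product, Finset.card_product]
  push_cast
  calc _ ≤ (3 * (R * 2 ^ j) : ℝ) * ((3 * (R * 2 ^ j)) * (3 * (R * 4 ^ j))) := by gcongr
    _ = _ := by
      have : (4 : ℝ) ^ j = 2 ^ j * 2 ^ j := by rw [← mul_pow]; norm_num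
      rw [this]; ring

lemma xjk_eq (j : ℕ) (k : ℤ × ℤ × ℤ) :
    xjk (j : ℤ) k = ((k.1 : ℝ) / 2 ^ j, (k.2.1 : ℝ) / 2 ^ j, (k.2.2 : ℝ) / 4 ^ j) := by
  have : (4 : ℝ) ^ j = 2 ^ j * 2 ^ j := by rw [← mul_pow]; norm_num
  simp only [xjk, Hdil, latticePt, zpow_neg, zpow_natCast]
  refine Prod.ext ?_ (Prod.ext ?_ ?_) <;> simp only
  · field_simp
  · field_simp
  · rw [this]; field_simp

lemma mem_kbox {C : ℝ} {R : ℕ} (hR : 6 + 4 * C + C ^ 2 ≤ R) {x : H3} (hx : x ∈ C0) {j : ℕ}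
    {k : ℤ × ℤ × ℤ} (h : Hdist x (xjk (j : ℤ) k) ≤ C) : k ∈ kbox R j := by
  have a1 := abs_fst_le h
  have a2 := abs_snd_le h
  have a3 := abs_trd_le h
  have hC : 0 ≤ C := (abs_nonneg _).trans a1
  rw [xjk_eq] at a1 a2 a3
  obtain ⟨⟨p0, p1⟩, ⟨q0, q1⟩, ⟨r0, r1⟩⟩ := hx
  simp only [Hmul, Hinv] at a1 a2 a3
  set a := (k.1 : ℝ) / 2 ^ j with ha
  set b := (k.2.1 : ℝ) / 2 ^ j with hb
  set c := (k.2.2 : ℝ) / 4 ^ j with hc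
  have A : |a| ≤ C + 1 := by rw [abs_le] at *; constructor <;> linarith
  have B : |b| ≤ C + 1 := by rw [abs_le] at *; constructor <;> linarith
  have m1 : |x.2.1 * a| ≤ C + 1 := by
    rw [abs_mul, abs_of_nonneg q0]; nlinarith [abs_nonneg a]
  have m2 : |x.1 * b| ≤ C + 1 := by
    rw [abs_mul, abs_of_nonneg p0]; nlinarith [abs_nonneg b]
  have D : |c| ≤ R := by rw [abs_le] at *; constructor <;> linarith
  have A' : |a| ≤ R := by nlinarith
  have B' : |b| ≤ R := by nlinarith
  have conv : ∀ (k : ℤ) (N : ℕ), 0 < N → |(k : ℝ) / N| ≤ R → -(R * N : ℤ) ≤ k ∧ k ≤ R * N := by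
    intro k N hN hk
    rw [abs_div, Nat.abs_cast, div_le_iff₀ (by exact_mod_cast hN)] at hk
    rw [← abs_le]
    exact_mod_cast hk
  have c1 := conv k.1 (2 ^ j) (by positivity) (by push_cast; exact A')
  have c2 := conv k.2.1 (2 ^ j) (by positivity) (by push_cast; exact B')
  have c3 := conv k.2.2 (4 ^ j) (by positivity) (by push_cast; exact D)
  push_cast at c1 c2 c3
  simp only [kbox, Finset.mem_product, Finset.mem_Icc]
  exact ⟨c1, c2, c3⟩

lemma exists_large {C : ℝ} {J : ℕ → ℕ} {ξ : ℝ} (hξ : 0 < ξ) {R : ℕ}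
    (hR : 6 + 4 * C + C ^ 2 ≤ R) (hC : 0 < C)
    {x : H3} (hx : x ∈ SXi C J ξ) (M : ℕ) :
    ∃ m, M ≤ m ∧ ∃ k ∈ kbox R (J m), Hdist x (xjk (J m : ℤ) k) ≤ C * (2 : ℝ) ^ (-(J m : ℝ) * ξ) := by
  have hbox : ∀ m k, Hdist x (xjk (J m : ℤ) k) ≤ C * (2 : ℝ) ^ (-(J m : ℝ) * ξ) →
      k ∈ kbox R (J m) := by
    intro m k h
    apply mem_kbox hR hx.1
    refine h.trans ?_
    have : (2 : ℝ) ^ (-(J m : ℝ) * ξ) ≤ 1 := by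
      apply Real.rpow_le_one_of_one_le_of_nonpos (by norm_num)
      have : (0 : ℝ) ≤ J m := by positivity
      nlinarith
    nlinarith
  by_contra hcon
  push Not at hcon
  apply hx.2
  apply Set.Finite.subset (s := ⋃ m ∈ Finset.range M, (Prod.mk m) '' (kbox R (J m) : Set (ℤ × ℤ × ℤ)))
  · apply Set.Finite.biUnion (Finset.finite_toSet _)
    intro m _
    exact (Finset.finite_toSet _).image _
  · rintro ⟨m, k⟩ hmk
    have hmk' : Hdist x (xjk (J m : ℤ) k) ≤ C * (2 : ℝ) ^ (-(J m : ℝ) * ξ) := hmk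
    have hk := hbox m k hmk'
    have hm : m < M := by
      by_contra hm
      exact absurd hmk' (not_le.2 (hcon m (not_lt.1 hm) k hk))
    simp only [Set.mem_iUnion]
    exact ⟨m, Finset.mem_coe.2 (Finset.mem_range.2 hm), k, hk, rfl⟩

lemma SXi_null {C : ℝ} (hC : 0 < C) {J : ℕ → ℕ} (hJ : StrictMono J) {ξ d : ℝ} (hξ : 0 < ξ)
    (hd : 4 / ξ < d) : gaugeHausdorff d (SXi C J ξ) = 0 := by
  have hd0 : 0 < d := lt_trans (by positivity) hd
  obtain ⟨R, hR⟩ := exists_nat_ge (6 + 4 * C + C ^ 2)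
  have hR1 : 1 ≤ R := by
    have : (1 : ℝ) ≤ R := by nlinarith
    exact_mod_cast this
  have hξd : 4 < ξ * d := by rw [div_lt_iff₀ hξ] at hd; linarith
  set θ : ℝ := 2 ^ (-(ξ * d - 4)) with hθ
  have hθ0 : 0 < θ := by positivity
  have hθ1 : θ < 1 := Real.rpow_lt_one_of_one_lt_of_neg (by norm_num) (by linarith)
  set ϑ : ℝ := 2 ^ (-ξ) with hϑ
  have hϑ0 : 0 < ϑ := by positivity
  have hϑ1 : ϑ < 1 := Real.rpow_lt_one_of_one_lt_of_neg (by norm_num) (by linarith)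
  have hpow : ∀ m : ℕ, (2 : ℝ) ^ (-(m : ℝ) * ξ) = ϑ ^ m := by
    intro m
    rw [hϑ, ← Real.rpow_natCast, ← Real.rpow_mul (by norm_num)]
    congr 1; ring
  have hθϑ : ∀ m : ℕ, (2 : ℝ) ^ (4 * m) * (ϑ ^ m) ^ d = θ ^ m := by
    intro m
    rw [hϑ, hθ, ← Real.rpow_natCast, ← Real.rpow_natCast, ← Real.rpow_natCast,
      ← Real.rpow_mul (by positivity), ← Real.rpow_mul (by positivity), ← Real.rpow_mul (by positivity),
      ← Real.rpow_add (by norm_num)]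
    congr 1; push_cast; ring
  set K : ℝ := (3 * R) ^ 3 * (8 * C) ^ d with hK
  have hK0 : 0 ≤ K := by positivity
  apply gaugeHausdorff_zero_of_cover (ι := ℕ × (ℤ × ℤ × ℤ)) hd0
  intro η hη ε hε
  have t1 : Filter.Tendsto (fun M : ℕ => 2 * C * ϑ ^ M) Filter.atTop (nhds 0) := by
    simpa using (tendsto_pow_atTop_nhds_zero_of_lt_one hϑ0.le hϑ1).const_mul (2 * C)
  have t2 : Filter.Tendsto (fun M : ℕ => ENNReal.ofReal (K * (θ ^ M * (1 - θ)⁻¹)))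
      Filter.atTop (nhds 0) := by
    have : Filter.Tendsto (fun M : ℕ => (K * (θ ^ M * (1 - θ)⁻¹))) Filter.atTop (nhds 0) := by
      simpa using ((tendsto_pow_atTop_nhds_zero_of_lt_one hθ0.le hθ1).mul_const
        ((1 - θ)⁻¹)).const_mul K
    simpa using ENNReal.tendsto_ofReal this
  obtain ⟨M, hM1, hM2⟩ := ((t1.eventually_lt_const hη).and (t2.eventually_le_const hε)).exists
  have hJge : ∀ m, m ≤ J m := hJ.id_le
  refine ⟨fun i => xjk (J (i.1 + M) : ℤ) i.2,
    fun i => if i.2 ∈ kbox R (J (i.1 + M)) then 2 * C * ϑ ^ (J (i.1 + M)) else 0, ?_, ?_, ?_⟩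
  · rintro ⟨m, k⟩
    simp only
    split_ifs
    · refine ⟨by positivity, lt_of_le_of_lt ?_ hM1⟩
      have : ϑ ^ J (m + M) ≤ ϑ ^ M :=
        pow_le_pow_of_le_one hϑ0.le hϑ1.le (by have := hJge (m + M); omega)
      gcongr
    · exact ⟨le_rfl, hη⟩
  · intro x hx
    obtain ⟨m, hm, k, hk, hdist⟩ := exists_large hξ hR hC hx M
    obtain ⟨n, rfl⟩ := Nat.exists_eq_add_of_le' hm
    refine Set.mem_iUnion.2 ⟨(n, k), ?_⟩
    simp only [Hball, Set.mem_ofPred_eq, hk, if_true]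
    rw [Hdist_comm]
    rw [hpow] at hdist
    have : 0 < C * ϑ ^ J (n + M) := by positivity
    linarith
  · refine le_trans ?_ hM2
    rw [ENNReal.tsum_prod']
    have hm : ∀ m : ℕ, ∑' k : ℤ × ℤ × ℤ, ENNReal.ofReal ((4 * (if k ∈ kbox R (J (m + M)) then
        2 * C * ϑ ^ (J (m + M)) else 0)) ^ d) ≤ ENNReal.ofReal (K * θ ^ M * θ ^ m) := by
      intro m
      rw [tsum_eq_sum (s := kbox R (J (m + M)))]
      · rw [Finset.sum_congr rfl (g := fun _ => ENNReal.ofReal ((8 * C * ϑ ^ (J (m + M))) ^ d))]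
        · rw [Finset.sum_const, nsmul_eq_mul, ← ENNReal.ofReal_natCast,
            ← ENNReal.ofReal_mul (by positivity)]
          apply ENNReal.ofReal_le_ofReal
          rw [Real.mul_rpow (by positivity) (by positivity)]
          calc _ ≤ ((3 * R) ^ 3 * 2 ^ (4 * J (m + M))) * ((8 * C) ^ d * (ϑ ^ J (m + M)) ^ d) := by
                gcongr; exact kbox_card hR1 _
            _ = K * (2 ^ (4 * J (m + M)) * (ϑ ^ J (m + M)) ^ d) := by rw [hK]; ring
            _ = K * θ ^ (J (m + M)) := by rw [hθϑ]
            _ ≤ K * θ ^ (m + M) := by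
                gcongr ?_ * ?_
                exact pow_le_pow_of_le_one hθ0.le hθ1.le (hJge _)
            _ = _ := by ring
        · intro k hk
          rw [if_pos hk]; congr 2; ring
      · intro k hk
        rw [if_neg hk, mul_zero, Real.zero_rpow hd0.ne', ENNReal.ofReal_zero]
    refine (ENNReal.tsum_le_tsum hm).trans ?_
    rw [← ENNReal.ofReal_tsum_of_nonneg (fun n => by positivity)
      ((summable_geometric_of_lt_one hθ0.le hθ1).mul_left _), tsum_mul_left,
      tsum_geometric_of_lt_one hθ0.le hθ1, mul_assoc]

lemma Approximable_anti {C : ℝ} (hC : 0 < C) {J : ℕ → ℕ} {ξ ξ' : ℝ} (h : ξ' ≤ ξ) {x : H3}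
    (hx : Approximable C J ξ x) : Approximable C J ξ' x := by
  refine Set.Infinite.mono ?_ hx
  intro mk hmk
  have hmk' : Hdist x (xjk (J mk.1 : ℤ) mk.2) ≤ C * (2 : ℝ) ^ (-(J mk.1 : ℝ) * ξ) := hmk
  refine le_trans hmk' ?_
  refine mul_le_mul_of_nonneg_left ?_ hC.le
  apply Real.rpow_le_rpow_of_exponent_le (by norm_num)
  have : (0 : ℝ) ≤ J mk.1 := by positivity
  nlinarith

lemma SXiTilde_subset {C : ℝ} (hC : 0 < C) {J : ℕ → ℕ} {ξ ξ' : ℝ} (h0 : 0 ≤ ξ') (h : ξ' < ξ) :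
    SXiTilde C J ξ ⊆ SXi C J ξ' := by
  rintro x ⟨hx, hr⟩
  refine ⟨hx, ?_⟩
  unfold approxRate at hr
  have hne : {ξ : ℝ | 0 < ξ ∧ Approximable C J ξ x}.Nonempty := by
    by_contra hne
    rw [Set.not_nonempty_iff_eq_empty] at hne
    rw [hne, Real.sSup_empty] at hr
    linarith
  obtain ⟨t, ht, hlt⟩ := exists_lt_of_lt_csSup hne (by rw [hr]; exact h)
  exact Approximable_anti hC hlt.le ht.2

open Classical in
/-- Digits of `ω` kept only at the free positions `A`. -/
def dg (A : Set ℕ) (ω : ℕ → Fin 2) : ℕ → Fin 2 := fun n => if n ∈ A then ω n else 0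

/-- The random real with free binary digits at positions in `A`. -/
def XA (A : Set ℕ) (ω : ℕ → Fin 2) : ℝ := Real.ofDigits (dg A ω)

/-- Integer truncation of a digit sequence. -/
def Yt (a : ℕ → Fin 2) : ℕ → ℕ
  | 0 => 0
  | n + 1 => 2 * Yt a n + (a n : ℕ)

lemma sum_eq_Yt (a : ℕ → Fin 2) (n : ℕ) :
    ∑ i ∈ Finset.range n, Real.ofDigitsTerm a i = (Yt a n : ℝ) / 2 ^ n := by
  induction n with
  | zero => simp [Yt]
  | succ n ih =>
    rw [Finset.sum_range_succ, ih, Yt, Real.ofDigitsTerm]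
    push_cast
    field_simp
    ring

lemma ofDigits_split (a : ℕ → Fin 2) (n : ℕ) :
    ∃ t : ℝ, 0 ≤ t ∧ t ≤ 1 ∧ Real.ofDigits a = (Yt a n : ℝ) / 2 ^ n + t / 2 ^ n := by
  refine ⟨Real.ofDigits (fun i => a (i + n)), Real.ofDigits_nonneg _, Real.ofDigits_le_one _, ?_⟩
  rw [Real.ofDigits_eq_sum_add_ofDigits a n, sum_eq_Yt]
  push_cast
  ring

lemma Yt_zero_block (a : ℕ → Fin 2) {n N : ℕ} (h : n ≤ N) (h0 : ∀ k, n ≤ k → k < N → a k = 0) :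
    (Yt a N : ℝ) / 2 ^ N = (Yt a n : ℝ) / 2 ^ n := by
  induction N, h using Nat.le_induction with
  | base => rfl
  | succ N hN ih =>
    rw [← ih (fun k h1 h2 => h0 k h1 (by omega)), Yt, h0 N hN (by omega)]
    push_cast
    field_simp
    simp
    ring

/-- If the digits vanish in `[n, N)`, the real is very close to a dyadic of level `n`. -/
lemma ofDigits_block (a : ℕ → Fin 2) {n N : ℕ} (h : n ≤ N) (h0 : ∀ k, n ≤ k → k < N → a k = 0) :
    ∃ t : ℝ, 0 ≤ t ∧ t ≤ 1 ∧ Real.ofDigits a = (Yt a n : ℝ) / 2 ^ n + t / 2 ^ N := by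
  obtain ⟨t, t0, t1, ht⟩ := ofDigits_split a N
  exact ⟨t, t0, t1, by rw [ht, Yt_zero_block a h h0]⟩

lemma Yt_inj {a b : ℕ → Fin 2} {n : ℕ} (h : Yt a n = Yt b n) : ∀ k < n, a k = b k := by
  induction n with
  | zero => intro k hk; omega
  | succ n ih =>
    simp only [Yt] at h
    have h1 := (a n).isLt
    have h2 := (b n).isLt
    intro k hk
    rcases Nat.lt_succ_iff_lt_or_eq.1 hk with hk | rfl
    · exact ih (by omega) k hk
    · exact Fin.ext (by omega)

/-- The fair coin. -/
def coin : Measure (Fin 2) := (PMF.uniformOfFintype (Fin 2)).toMeasure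

instance : IsProbabilityMeasure coin := by unfold coin; infer_instance

lemma coin_singleton (a : Fin 2) : coin {a} = 2⁻¹ := by
  unfold coin
  rw [PMF.toMeasure_apply_singleton _ _ (measurableSet_singleton _)]
  simp

/-- Infinitely many fair coins. -/
def nuC : Measure (ℕ → Fin 2) := Measure.infinitePi (fun _ : ℕ => coin)

instance : IsProbabilityMeasure nuC := by unfold nuC; infer_instance

open Classical in
/-- Number of free positions below `n`. -/
def Fr (A : Set ℕ) (n : ℕ) : ℕ := ((Finset.range n).filter (· ∈ A)).card

lemma nuC_Yt_le (A : Set ℕ) (n : ℕ) (v : ℤ) :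
    nuC {ω | (Yt (dg A ω) n : ℤ) = v} ≤ (2⁻¹ : ℝ≥0∞) ^ (Fr A n) := by
  classical
  rcases Set.eq_empty_or_nonempty {ω | (Yt (dg A ω) n : ℤ) = v} with he | ⟨ω0, h0⟩
  · rw [he]; simp
  · have h0' : (Yt (dg A ω0) n : ℤ) = v := h0
    have hsub : {ω | (Yt (dg A ω) n : ℤ) = v} ⊆
        Set.pi (((Finset.range n).filter (· ∈ A) : Finset ℕ) : Set ℕ) (fun k => {ω0 k}) := by
      intro ω hω
      have hω' : (Yt (dg A ω) n : ℤ) = v := hω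
      have heq : Yt (dg A ω) n = Yt (dg A ω0) n := by
        have := hω'.trans h0'.symm
        exact_mod_cast this
      intro k hk
      have hk' := Finset.mem_filter.1 (Finset.mem_coe.1 hk)
      have := Yt_inj heq k (Finset.mem_range.1 hk'.1)
      simpa [dg, hk'.2] using this
    refine (measure_mono hsub).trans ?_
    unfold nuC
    rw [Measure.infinitePi_pi _ (fun i _ => measurableSet_singleton _)]
    simp only [coin_singleton, Finset.prod_const]
    unfold Fr
    exact le_of_eq (by congr)

lemma nuC_interval (A : Set ℕ) (n : ℕ) (y ρ : ℝ) (hρ : ρ ≤ 1 / 2 ^ n) :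
    nuC {ω | |XA A ω - y| ≤ ρ} ≤ 4 * (2⁻¹ : ℝ≥0∞) ^ (Fr A n) := by
  have hsub : {ω | |XA A ω - y| ≤ ρ} ⊆ ⋃ i ∈ Finset.range 4,
      {ω | (Yt (dg A ω) n : ℤ) = ⌈2 ^ n * y⌉ - 2 + (i : ℤ)} := by
    intro ω hω
    have hω' : |XA A ω - y| ≤ ρ := hω
    obtain ⟨t, t0, t1, ht⟩ := ofDigits_split (dg A ω) n
    have hp : (0 : ℝ) < 2 ^ n := by positivity
    have hX : 2 ^ n * XA A ω = Yt (dg A ω) n + t := by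
      unfold XA; rw [ht]; field_simp
    have hab := abs_le.1 (hω'.trans hρ)
    have e1 : 2 ^ n * XA A ω ≤ 2 ^ n * y + 1 := by
      have := mul_le_mul_of_nonneg_left (show XA A ω ≤ y + 1 / 2 ^ n by linarith) hp.le
      rw [mul_add, mul_one_div_cancel hp.ne'] at this
      exact this
    have e2 : 2 ^ n * y - 1 ≤ 2 ^ n * XA A ω := by
      have := mul_le_mul_of_nonneg_left (show y - 1 / 2 ^ n ≤ XA A ω by linarith) hp.le
      rw [mul_sub, mul_one_div_cancel hp.ne'] at this
      exact this
    have c1 := Int.ceil_lt_add_one (2 ^ n * y)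
    have c2 := Int.le_ceil (2 ^ n * y)
    set m := ⌈2 ^ n * y⌉
    have l1 : m - 2 ≤ (Yt (dg A ω) n : ℤ) := by
      have : ((m - 3 : ℤ) : ℝ) < ((Yt (dg A ω) n : ℤ) : ℝ) := by push_cast; linarith
      have := Int.cast_lt.1 this
      omega
    have l2 : (Yt (dg A ω) n : ℤ) ≤ m + 1 := by
      have : ((Yt (dg A ω) n : ℤ) : ℝ) ≤ ((m + 1 : ℤ) : ℝ) := by push_cast; linarith
      exact Int.cast_le.1 this
    simp only [Set.mem_iUnion]
    refine ⟨((Yt (dg A ω) n : ℤ) - (m - 2)).toNat, Finset.mem_range.2 (by omega), ?_⟩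
    show (Yt (dg A ω) n : ℤ) = _
    omega
  refine (measure_mono hsub).trans ((measure_biUnion_finset_le _ _).trans ?_)
  refine (Finset.sum_le_sum (fun i _ => nuC_Yt_le A n _)).trans ?_
  simp

lemma nuC_interval_rpow {A : Set ℕ} {d K0 : ℝ} (hd : 0 < d) (hK0 : 0 ≤ K0)
    (hF : ∀ n : ℕ, d * n ≤ Fr A n + K0) :
    ∃ K : ℝ, 0 < K ∧ ∀ y ρ : ℝ, 0 < ρ →
      nuC {ω | |XA A ω - y| ≤ ρ} ≤ ENNReal.ofReal (K * ρ ^ d) := by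
  refine ⟨4 * 2 ^ K0 * 2 ^ d, by positivity, fun y ρ hρ => ?_⟩
  by_cases h1 : 1 ≤ ρ
  · refine prob_le_one.trans ?_
    rw [← ENNReal.ofReal_one]
    apply ENNReal.ofReal_le_ofReal
    have a1 : 1 ≤ ρ ^ d := Real.one_le_rpow h1 hd.le
    have a2 : (1 : ℝ) ≤ 2 ^ d := Real.one_le_rpow (by norm_num) hd.le
    have a3 : (1 : ℝ) ≤ 2 ^ K0 := Real.one_le_rpow (by norm_num) hK0
    have a4 : (1 : ℝ) ≤ 4 * 2 ^ K0 := by linarith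
    exact one_le_mul_of_one_le_of_one_le (one_le_mul_of_one_le_of_one_le a4 a2) a1
  · push Not at h1
    obtain ⟨n, hn1, hn2⟩ := exists_nat_pow_near_of_lt_one hρ h1.le (by norm_num : (0:ℝ) < 1 / 2) (by norm_num)
    refine (nuC_interval A n y ρ (by simpa using hn2)).trans ?_
    have e : 4 * (2⁻¹ : ℝ≥0∞) ^ (Fr A n) = ENNReal.ofReal (4 * (1 / 2) ^ (Fr A n)) := by
      rw [ENNReal.ofReal_mul (by norm_num), ENNReal.ofReal_pow (by norm_num)]
      congr 1
      · simp
      · rw [one_div, ENNReal.ofReal_inv_of_pos (by norm_num)]; simp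
    rw [e]
    apply ENNReal.ofReal_le_ofReal
    have p1 : (1 / 2 : ℝ) ^ (Fr A n) ≤ 2 ^ K0 * 2 ^ (-(d * n)) := by
      rw [← Real.rpow_add (by norm_num), one_div, inv_pow, ← Real.rpow_natCast, ← Real.rpow_neg (by norm_num)]
      apply Real.rpow_le_rpow_of_exponent_le (by norm_num)
      linarith [hF n]
    have p2 : (2 : ℝ) ^ (-(d * n)) ≤ 2 ^ d * ρ ^ d := by
      rw [← Real.mul_rpow (by norm_num) hρ.le]
      have : (2 : ℝ) ^ (-(d * n)) = ((1 / 2) ^ n) ^ d := by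
        rw [one_div, inv_pow, ← Real.rpow_natCast, ← Real.rpow_neg (by norm_num), ← Real.rpow_mul (by norm_num)]
        congr 1; ring
      rw [this]
      apply Real.rpow_le_rpow (by positivity) _ hd.le
      rw [pow_succ] at hn1
      linarith
    calc 4 * (1 / 2 : ℝ) ^ (Fr A n) ≤ 4 * (2 ^ K0 * (2 ^ d * ρ ^ d)) := by
          gcongr; exact p1.trans (by gcongr)
      _ = _ := by ring

lemma Fr_mono (A : Set ℕ) {a b : ℕ} (h : a ≤ b) : Fr A a ≤ Fr A b := by
  classical
  unfold Fr
  exact Finset.card_le_card (Finset.filter_subset_filter _ (Finset.range_mono h))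

lemma Fr_add (A : Set ℕ) {a b : ℕ} (h : a ≤ b) (hA : ∀ k, a ≤ k → k < b → k ∈ A) :
    Fr A b = Fr A a + (b - a) := by
  classical
  induction b, h using Nat.le_induction with
  | base => simp
  | succ b hb ih =>
    have := ih (fun k h1 h2 => hA k h1 (by omega))
    have hs : Fr A (b + 1) = Fr A b + 1 := by
      unfold Fr
      rw [Finset.range_add_one, Finset.filter_insert, if_pos (hA b hb (by omega)),
        Finset.card_insert_of_notMem (by simp)]
    omega

/-- Free positions associated with blocks `[c j_i, c N_i)`. -/
def freeSet (j N : ℕ → ℕ) (c : ℕ) : Set ℕ := {n | 1 ≤ n ∧ ∀ i, ¬ (c * j i ≤ n ∧ n < c * N i)}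

lemma freeSet_count {j N : ℕ → ℕ} {ξ : ℝ} (hξ : 1 ≤ ξ) (hj0 : ∀ i, i + 1 ≤ j i) (hjN : ∀ i, j i ≤ N i)
    (hN : ∀ i, (N i : ℝ) ≤ ξ * j i + 1) (hsp : ∀ i, (i + 1) * N i ≤ j (i + 1))
    {c : ℕ} (hc : 1 ≤ c) {d : ℝ} (hd : 0 < d) (hdξ : d * ξ < 1) :
    ∃ K0 : ℝ, 0 ≤ K0 ∧ ∀ n : ℕ, d * n ≤ Fr (freeSet j N c) n + K0 := by
  have hNj : ∀ i, N i ≤ j (i + 1) := fun i => le_trans (by nlinarith) (hsp i)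
  have hjm : Monotone j := monotone_nat_of_le_succ fun i => (hjN i).trans (hNj i)
  have hNm : Monotone N := monotone_nat_of_le_succ fun i => (hNj i).trans (hjN (i + 1))
  have hd1 : d ≤ 1 := by nlinarith
  obtain ⟨i0, hi0⟩ := exists_nat_gt (1 / (1 - d * ξ))
  have hpos : 0 < 1 - d * ξ := by linarith
  have hgap : ∀ i k, c * N i ≤ k → k < c * j (i + 1) → k ∈ freeSet j N c := by
    intro i k h1 h2
    refine ⟨?_, ?_⟩
    · have := hj0 i; have := hjN i; nlinarith
    · rintro i' ⟨h3, h4⟩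
      rcases le_or_gt i' i with h | h
      · have := Nat.mul_le_mul_left c (hNm h); omega
      · have := Nat.mul_le_mul_left c (hjm (show i + 1 ≤ i' from h)); omega
  refine ⟨c * N i0 + c, by positivity, ?_⟩
  have hind : ∀ i, i0 ≤ i → ∀ n : ℕ, n ≤ c * N i → d * n ≤ Fr (freeSet j N c) n + (c * N i0 + c) := by
    intro i hi
    induction i, hi using Nat.le_induction with
    | base =>
      intro n hn
      have hn' : (n : ℝ) ≤ c * N i0 := by exact_mod_cast hn
      have : d * n ≤ n := by nlinarith [Nat.cast_nonneg (α := ℝ) n]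
      have : (0:ℝ) ≤ Fr (freeSet j N c) n := by positivity
      have : (0:ℝ) ≤ c := by positivity
      linarith
    | succ i hi ih =>
      intro n hn
      rcases le_or_gt n (c * N i) with h | h
      · exact ih n h
      rcases le_or_gt n (c * j (i + 1)) with h' | h'
      · have h1 := Fr_add (freeSet j N c) h.le (fun k a b => hgap i k a (by omega))
        have h2 := ih (c * N i) le_rfl
        have h3 : (Fr (freeSet j N c) n : ℝ) = Fr (freeSet j N c) (c * N i) + (n - (c * N i : ℕ)) := by
          rw [h1]; push_cast [Nat.cast_sub h.le]; ring
        have h4 : ((c * N i : ℕ) : ℝ) ≤ n := by exact_mod_cast h.le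
        rw [h3]
        nlinarith
      · have hle : c * N i ≤ c * j (i + 1) := Nat.mul_le_mul_left c (hNj i)
        have h1 := Fr_add (freeSet j N c) hle (fun k a b => hgap i k a b)
        have h2 : c * j (i + 1) ≤ Fr (freeSet j N c) n + c * N i := by
          have := Fr_mono (freeSet j N c) h'.le
          omega
        have h2' : (c : ℝ) * j (i + 1) ≤ Fr (freeSet j N c) n + c * N i := by exact_mod_cast h2
        have h3 : ((i : ℝ) + 1) * N i ≤ j (i + 1) := by exact_mod_cast hsp i
        have hii : 1 / (1 - d * ξ) < (i : ℝ) + 1 := by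
          have : (i0 : ℝ) ≤ i := by exact_mod_cast hi
          linarith
        rw [div_lt_iff₀ hpos] at hii
        -- N i ≤ (1 - dξ) j
        have h4 : (N i : ℝ) ≤ (1 - d * ξ) * j (i + 1) := by
          have : (0:ℝ) ≤ N i := by positivity
          nlinarith
        have h5 : (n : ℝ) ≤ c * N (i + 1) := by exact_mod_cast hn
        have hc0 : (0 : ℝ) ≤ c := by positivity
        have h6 : (c : ℝ) * N i ≤ c * ((1 - d * ξ) * j (i + 1)) := mul_le_mul_of_nonneg_left h4 hc0
        have h7 : (c : ℝ) * N (i + 1) ≤ c * (ξ * j (i + 1) + 1) := mul_le_mul_of_nonneg_left (hN _) hc0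
        have h8 : d * n ≤ d * (c * (ξ * j (i + 1) + 1)) := mul_le_mul_of_nonneg_left (h5.trans h7) hd.le
        have h9 : d * c ≤ c := by nlinarith
        have h10 : (0:ℝ) ≤ c * N i0 := by positivity
        nlinarith
  have hlarge : ∀ i, i ≤ N i := by
    intro i
    have := hj0 i
    have := hjN i
    omega
  intro n
  refine hind (max i0 n) (le_max_left _ _) n ?_
  have := hlarge (max i0 n)
  have h2 := le_max_right i0 n
  nlinarith

/-- Sparse scales `j_i` together with the accuracy exponents `N_i`. -/
structure Scales (ξ : ℝ) (j N : ℕ → ℕ) : Prop where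
  jpos : ∀ i, i + 5 ≤ j i
  jmono : StrictMono j
  jN : ∀ i, j i ≤ N i
  Nle : ∀ i, (N i : ℝ) ≤ ξ * j i + 1
  leN : ∀ i, ξ * j i ≤ (N i : ℝ)
  sp : ∀ i, (i + 2) * N i ≤ j (i + 1)

lemma exists_scales {J : ℕ → ℕ} (hJ : StrictMono J) {ξ : ℝ} (hξ : 1 ≤ ξ) :
    ∃ mm : ℕ → ℕ, StrictMono mm ∧ Scales ξ (fun i => J (mm i)) (fun i => ⌈ξ * J (mm i)⌉₊) := by
  let mm : ℕ → ℕ := fun i => Nat.rec 5 (fun i m => (i + 2) * ⌈ξ * J m⌉₊ + m + 1) i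
  have hs : ∀ i, mm (i + 1) = (i + 2) * ⌈ξ * J (mm i)⌉₊ + mm i + 1 := fun i => rfl
  have hm : StrictMono mm := strictMono_nat_of_lt_succ fun i => by rw [hs]; omega
  have hge : ∀ m, m ≤ J m := hJ.id_le
  have h5 : ∀ i, i + 5 ≤ mm i := by
    intro i
    induction i with
    | zero => exact le_rfl
    | succ i ih => rw [hs]; omega
  refine ⟨mm, hm, ⟨fun i => (h5 i).trans (hge _), hJ.comp hm, ?_, ?_, ?_, ?_⟩⟩
  · intro i
    have : (J (mm i) : ℝ) ≤ ⌈ξ * J (mm i)⌉₊ := by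
      refine le_trans ?_ (Nat.le_ceil _)
      have : (0 : ℝ) ≤ J (mm i) := by positivity
      nlinarith
    exact_mod_cast this
  · intro i
    exact (Nat.ceil_lt_add_one (by positivity)).le
  · intro i; exact Nat.le_ceil _
  · intro i
    refine le_trans ?_ (hge _)
    rw [hs]
    omega

section Construction

variable {ξ : ℝ} {j N : ℕ → ℕ}

/-- Horizontal coordinate. -/
def pc (j N : ℕ → ℕ) (ω : ℕ → Fin 2) : ℝ := XA (freeSet j N 1) ω

/-- Dyadic truncation of the horizontal coordinate. -/
def ac (j N : ℕ → ℕ) (i : ℕ) (ω : ℕ → Fin 2) : ℝ := (Yt (dg (freeSet j N 1) ω) (j i) : ℝ) / 2 ^ (j i)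

/-- The twist at scale `i`. -/
def sc (j N : ℕ → ℕ) (i : ℕ) (z : (ℕ → Fin 2) × (ℕ → Fin 2)) : ℝ :=
  2 * ((pc j N z.1 - ac j N i z.1) * ac j N i z.2 - (pc j N z.2 - ac j N i z.2) * ac j N i z.1)

/-- The discretised twist at scale `i`. -/
def dc (j N : ℕ → ℕ) (i : ℕ) (z : (ℕ → Fin 2) × (ℕ → Fin 2)) : ℝ :=
  (⌊4 ^ (N i) * sc j N i z⌋ : ℝ) / 4 ^ (N i)

/-- The total vertical correction. -/
def hc (j N : ℕ → ℕ) (z : (ℕ → Fin 2) × (ℕ → Fin 2)) : ℝ := ∑' i, dc j N i z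

/-- The random point. -/
def PhiC (j N : ℕ → ℕ) (w : ((ℕ → Fin 2) × (ℕ → Fin 2)) × (ℕ → Fin 2)) : H3 :=
  (pc j N w.1.1, pc j N w.1.2, 1 / 4 + XA (freeSet j N 2) w.2 + hc j N w.1)

lemma dg_block {c : ℕ} (ω : ℕ → Fin 2) (i k : ℕ) (h1 : c * j i ≤ k) (h2 : k < c * N i) :
    dg (freeSet j N c) ω k = 0 := by
  unfold dg
  rw [if_neg]
  rintro ⟨_, h⟩
  exact h i ⟨h1, h2⟩

lemma XA_range (c : ℕ) (ω : ℕ → Fin 2) :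
    0 ≤ XA (freeSet j N c) ω ∧ XA (freeSet j N c) ω ≤ 1 / 2 := by
  obtain ⟨t, t0, t1, ht⟩ := ofDigits_block (dg (freeSet j N c) ω) (n := 0) (N := 1) (by norm_num) (by
    intro k _ hk
    unfold dg
    rw [if_neg]
    rintro ⟨h, _⟩
    omega)
  unfold XA
  rw [ht]
  simp only [Yt]
  constructor
  · positivity
  · norm_num; linarith

lemma pc_ac (h : Scales ξ j N) (i : ℕ) (ω : ℕ → Fin 2) :
    0 ≤ pc j N ω - ac j N i ω ∧ pc j N ω - ac j N i ω ≤ 1 / 2 ^ (N i) := by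
  obtain ⟨t, t0, t1, ht⟩ := ofDigits_block (dg (freeSet j N 1) ω) (h.jN i) (by
    intro k h1 h2
    exact dg_block ω i k (by omega) (by omega))
  have : pc j N ω - ac j N i ω = t / 2 ^ (N i) := by
    unfold pc ac XA; rw [ht]; ring
  rw [this]
  exact ⟨by positivity, by gcongr⟩

lemma ac_range (h : Scales ξ j N) (i : ℕ) (ω : ℕ → Fin 2) :
    0 ≤ ac j N i ω ∧ ac j N i ω ≤ 1 := by
  refine ⟨by unfold ac; positivity, ?_⟩
  have h1 := (pc_ac h i ω).1
  have h2 := (XA_range (j := j) (N := N) 1 ω).2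
  unfold pc at h1
  linarith

lemma sc_abs (h : Scales ξ j N) (i : ℕ) (z : (ℕ → Fin 2) × (ℕ → Fin 2)) :
    |sc j N i z| ≤ 2 * (1 / 2 ^ (N i)) := by
  have u := pc_ac h i z.1
  have v := pc_ac h i z.2
  have a := ac_range h i z.1
  have b := ac_range h i z.2
  unfold sc
  rw [abs_le]
  constructor <;> nlinarith [mul_nonneg u.1 b.1, mul_nonneg v.1 a.1,
    mul_nonneg u.1 (sub_nonneg.2 b.2), mul_nonneg v.1 (sub_nonneg.2 a.2)]

lemma dc_sub (i : ℕ) (z : (ℕ → Fin 2) × (ℕ → Fin 2)) :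
    |dc j N i z - sc j N i z| ≤ 1 / 4 ^ (N i) := by
  have h1 := Int.floor_le (4 ^ (N i) * sc j N i z)
  have h2 := Int.lt_floor_add_one (4 ^ (N i) * sc j N i z)
  have hp : (0 : ℝ) < 4 ^ (N i) := by positivity
  have : dc j N i z - sc j N i z = (⌊4 ^ (N i) * sc j N i z⌋ - 4 ^ (N i) * sc j N i z) / 4 ^ (N i) := by
    unfold dc; field_simp
  rw [this, abs_div, abs_of_pos hp]
  gcongr
  rw [abs_le]; constructor <;> linarith

lemma dc_abs (h : Scales ξ j N) (i : ℕ) (z : (ℕ → Fin 2) × (ℕ → Fin 2)) :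
    |dc j N i z| ≤ 3 * (1 / 2 ^ (N i)) := by
  have h1 := sc_abs h i z
  have h2 := dc_sub (j := j) (N := N) i z
  have h3 : (1 : ℝ) / 4 ^ (N i) ≤ 1 / 2 ^ (N i) := by gcongr; norm_num
  have := abs_add_le (dc j N i z - sc j N i z) (sc j N i z)
  rw [sub_add_cancel] at this
  linarith

lemma dc_geom (h : Scales ξ j N) {i M l : ℕ} (hM : M + l ≤ N i) (z : (ℕ → Fin 2) × (ℕ → Fin 2)) :
    |dc j N i z| ≤ 3 * (1 / 2 ^ M) * (1 / 2) ^ l := by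
  refine (dc_abs h i z).trans ?_
  rw [mul_assoc]
  have : (1 : ℝ) / 2 ^ M * (1 / 2) ^ l = 1 / 2 ^ (M + l) := by
    rw [pow_add]; simp [mul_comm]
  rw [this]
  gcongr
  norm_num

lemma tsum_geom_bound {f : ℕ → ℝ} {K : ℝ} (hf : ∀ l, |f l| ≤ K * (1 / 2) ^ l) :
    Summable f ∧ |∑' l, f l| ≤ 2 * K := by
  have hg : HasSum (fun l : ℕ => K * (1 / 2 : ℝ) ^ l) (K * 2) := hasSum_geometric_two.mul_left K
  refine ⟨Summable.of_norm_bounded hg.summable hf, ?_⟩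
  have := tsum_of_norm_bounded (f := f) hg hf
  rw [Real.norm_eq_abs] at this
  linarith

lemma dc_summable (h : Scales ξ j N) (z : (ℕ → Fin 2) × (ℕ → Fin 2)) :
    Summable (fun i => dc j N i z) ∧ |hc j N z| ≤ 3 / 16 := by
  have := tsum_geom_bound (f := fun i => dc j N i z) (K := 3 * (1 / 2 ^ 5)) (fun l =>
    dc_geom h (by have := h.jpos l; have := h.jN l; omega) z)
  refine ⟨this.1, this.2.trans ?_⟩
  norm_num

lemma hc_tail (h : Scales ξ j N) (i : ℕ) (z : (ℕ → Fin 2) × (ℕ → Fin 2)) :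
    ∃ e : ℝ, |e| ≤ 6 * (1 / 4 ^ (N i)) ∧
      hc j N z = ∑ i' ∈ Finset.range i, dc j N i' z + dc j N i z + e := by
  have hb : ∀ l, 2 * N i + l ≤ N (l + (i + 1)) := by
    intro l
    induction l with
    | zero =>
      have := h.sp i; have := h.jN (i + 1)
      simp only [zero_add]
      nlinarith
    | succ l ih =>
      have h1 := h.jN (l + 1 + (i + 1))
      have h2 := h.sp (l + (i + 1))
      have h3 := h.jpos (l + (i + 1))
      have h4 := h.jN (l + (i + 1))
      have e : l + 1 + (i + 1) = l + (i + 1) + 1 := by ring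
      rw [e] at h1 ⊢
      have h5 : 2 * N (l + (i + 1)) ≤ (l + (i + 1) + 2) * N (l + (i + 1)) :=
        Nat.mul_le_mul_right _ (by omega)
      omega
  have key := tsum_geom_bound (f := fun l => dc j N (l + (i + 1)) z) (K := 3 * (1 / 2 ^ (2 * N i)))
    (fun l => dc_geom h (hb l) z)
  refine ⟨∑' l, dc j N (l + (i + 1)) z, ?_, ?_⟩
  · refine key.2.trans (le_of_eq ?_)
    rw [pow_mul]; norm_num; ring
  · unfold hc
    rw [← Finset.sum_range_succ, (dc_summable h z).1.sum_add_tsum_nat_add]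

lemma dc_partial_int (h : Scales ξ j N) (i : ℕ) (z : (ℕ → Fin 2) × (ℕ → Fin 2)) :
    ∃ m : ℤ, ∑ i' ∈ Finset.range i, dc j N i' z = (m : ℝ) / 4 ^ (j i) := by
  have hb : ∀ i' ∈ Finset.range i, dc j N i' z =
      ((⌊4 ^ (N i') * sc j N i' z⌋ * 4 ^ (j i - N i') : ℤ) : ℝ) / 4 ^ (j i) := by
    intro i' hi'
    have hle : N i' ≤ j i := by
      have h1 := h.sp i'
      have h2 := h.jmono.monotone (show i' + 1 ≤ i from Finset.mem_range.1 hi')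
      nlinarith
    unfold dc
    push_cast
    rw [div_eq_div_iff (by positivity) (by positivity), mul_assoc, ← pow_add, Nat.sub_add_cancel hle]
  exact ⟨∑ i' ∈ Finset.range i, (⌊4 ^ (N i') * sc j N i' z⌋ * 4 ^ (j i - N i')), by
    rw [Finset.sum_congr rfl hb, ← Finset.sum_div]; push_cast; rfl⟩

lemma PhiC_approx (h : Scales ξ j N) (i : ℕ) (w : ((ℕ → Fin 2) × (ℕ → Fin 2)) × (ℕ → Fin 2)) :
    ∃ k : ℤ × ℤ × ℤ, Hdist (PhiC j N w) (xjk (j i : ℤ) k) ≤ 4 * (1 / 2 ^ (N i)) := by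
  obtain ⟨e, he, hh⟩ := hc_tail h i w.1
  obtain ⟨m, hm⟩ := dc_partial_int h i w.1
  obtain ⟨t, t0, t1, ht⟩ := ofDigits_block (dg (freeSet j N 2) w.2)
    (n := 2 * j i) (N := 2 * N i) (by have := h.jN i; omega) (fun k a b => dg_block w.2 i k a b)
  have hj1 : 1 ≤ j i := by have := h.jpos i; omega
  rw [pow_mul, pow_mul] at ht
  norm_num at ht
  refine ⟨(Yt (dg (freeSet j N 1) w.1.1) (j i), Yt (dg (freeSet j N 1) w.1.2) (j i),
    m + Yt (dg (freeSet j N 2) w.2) (2 * j i) + 4 ^ (j i - 1)), ?_⟩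
  rw [xjk_eq]
  have h4 : ((4 : ℝ) ^ (j i - 1)) / 4 ^ (j i) = 1 / 4 := by
    obtain ⟨n, hn⟩ := Nat.exists_eq_add_of_le' hj1
    rw [hn, Nat.add_sub_cancel, pow_succ]; field_simp
  have u := pc_ac h i w.1.1
  have v := pc_ac h i w.1.2
  have hds := dc_sub (j := j) (N := N) i w.1
  have hq : (1 : ℝ) / 4 ^ N i = (1 / 2 ^ N i) ^ 2 := by
    rw [div_pow, one_pow, ← pow_mul, mul_comm, pow_mul]; norm_num
  have ht' : |t / 4 ^ (N i)| ≤ 1 / 4 ^ (N i) := by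
    rw [abs_of_nonneg (by positivity)]; gcongr
  have hR : (0 : ℝ) < 1 / 2 ^ N i := by positivity
  apply Hnorm_le_four
  · have : (Hmul (Hinv (PhiC j N w)) ((((Yt (dg (freeSet j N 1) w.1.1) (j i) : ℤ) : ℝ) / 2 ^ j i),
      (((Yt (dg (freeSet j N 1) w.1.2) (j i) : ℤ) : ℝ) / 2 ^ j i),
      (((m + Yt (dg (freeSet j N 2) w.2) (2 * j i) + 4 ^ (j i - 1) : ℤ) : ℝ) / 4 ^ j i))).1
      = -(pc j N w.1.1 - ac j N i w.1.1) := by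
      simp only [Hmul, Hinv, PhiC, ac]; push_cast; ring
    rw [this, abs_neg, abs_of_nonneg u.1]
    linarith
  · have : (Hmul (Hinv (PhiC j N w)) ((((Yt (dg (freeSet j N 1) w.1.1) (j i) : ℤ) : ℝ) / 2 ^ j i),
      (((Yt (dg (freeSet j N 1) w.1.2) (j i) : ℤ) : ℝ) / 2 ^ j i),
      (((m + Yt (dg (freeSet j N 2) w.2) (2 * j i) + 4 ^ (j i - 1) : ℤ) : ℝ) / 4 ^ j i))).2.1
      = -(pc j N w.1.2 - ac j N i w.1.2) := by
      simp only [Hmul, Hinv, PhiC, ac]; push_cast; ring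
    rw [this, abs_neg, abs_of_nonneg v.1]
    linarith
  · have : (Hmul (Hinv (PhiC j N w)) ((((Yt (dg (freeSet j N 1) w.1.1) (j i) : ℤ) : ℝ) / 2 ^ j i),
      (((Yt (dg (freeSet j N 1) w.1.2) (j i) : ℤ) : ℝ) / 2 ^ j i),
      (((m + Yt (dg (freeSet j N 2) w.2) (2 * j i) + 4 ^ (j i - 1) : ℤ) : ℝ) / 4 ^ j i))).2.2
      = -(t / 4 ^ (N i) + (dc j N i w.1 - sc j N i w.1) + e) := by
      simp only [Hmul, Hinv, PhiC]
      rw [hh, hm]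
      unfold XA
      rw [ht]
      push_cast
      rw [add_div, h4]
      simp only [sc, ac]
      ring
    rw [this, abs_neg, ← hq]
    have a1 := abs_add_le (t / 4 ^ (N i) + (dc j N i w.1 - sc j N i w.1)) e
    have a2 := abs_add_le (t / 4 ^ (N i)) (dc j N i w.1 - sc j N i w.1)
    linarith

lemma PhiC_mem (h : Scales ξ j N) (w : ((ℕ → Fin 2) × (ℕ → Fin 2)) × (ℕ → Fin 2)) :
    PhiC j N w ∈ C0 := by
  have h1 := XA_range (j := j) (N := N) 1 w.1.1
  have h2 := XA_range (j := j) (N := N) 1 w.1.2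
  have h3 := XA_range (j := j) (N := N) 2 w.2
  have h4 := abs_le.1 (dc_summable h w.1).2
  refine ⟨⟨h1.1, ?_⟩, ⟨h2.1, ?_⟩, ?_, ?_⟩ <;> simp only [PhiC, pc] <;> linarith

lemma measurable_dg (A : Set ℕ) : Measurable (dg A) := by
  classical
  apply measurable_pi_lambda
  intro n
  unfold dg
  by_cases hn : n ∈ A
  · simp only [hn, if_true]; exact measurable_pi_apply n
  · simp only [hn, if_false]; exact measurable_const

lemma measurable_XA (A : Set ℕ) : Measurable (XA A) := by
  unfold XA
  exact Real.continuous_ofDigits.measurable.comp (measurable_dg A)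

lemma measurable_Yt (n : ℕ) : Measurable (fun a : ℕ → Fin 2 => (Yt a n : ℝ)) := by
  induction n with
  | zero => simp only [Yt]; exact measurable_const
  | succ n ih =>
    simp only [Yt]
    push_cast
    refine (ih.const_mul 2).add ?_
    exact (measurable_of_countable (fun b : Fin 2 => ((b : ℕ) : ℝ))).comp (measurable_pi_apply n)

lemma measurable_ac (i : ℕ) : Measurable (ac j N i) := by
  unfold ac
  exact ((measurable_Yt (j i)).comp (measurable_dg _)).div_const _

lemma measurable_pc : Measurable (pc j N) := measurable_XA _

lemma measurable_sc (i : ℕ) : Measurable (sc j N i) := by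
  unfold sc
  have h1 : Measurable (pc j N) := measurable_pc
  have h2 : Measurable (ac j N i) := measurable_ac i
  fun_prop

lemma measurable_dc (i : ℕ) : Measurable (dc j N i) := by
  unfold dc
  have h2 : Measurable (sc j N i) := measurable_sc i
  exact ((measurable_of_countable (fun b : ℤ => (b : ℝ))).comp
    (Int.measurable_floor.comp (h2.const_mul _))).div_const _

lemma measurable_hc (h : Scales ξ j N) : Measurable (hc j N) := by
  refine measurable_of_tendsto_metrizable
    (f := fun n z => ∑ i ∈ Finset.range n, dc j N i z) ?_ ?_
  · intro n
    exact Finset.measurable_sum _ (fun i _ => measurable_dc i)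
  · rw [tendsto_pi_nhds]
    intro z
    exact (dc_summable h z).1.hasSum.tendsto_sum_nat

/-- The probability measure. -/
def PC3 : Measure (((ℕ → Fin 2) × (ℕ → Fin 2)) × (ℕ → Fin 2)) := (nuC.prod nuC).prod nuC

instance : IsProbabilityMeasure PC3 := by unfold PC3; infer_instance

lemma PC3_ball (hξ : 1 ≤ ξ) (h : Scales ξ j N) {d : ℝ} (hd : 0 < d) (hdξ : d < 4 / ξ) :
    ∃ K : ℝ, 0 < K ∧ ∀ c r, 0 < r →
      PC3 (PhiC j N ⁻¹' (Hball c r)) ≤ ENNReal.ofReal (K * r ^ d) := by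
  have hdξ' : d / 4 * ξ < 1 := by
    rw [lt_div_iff₀ (by linarith)] at hdξ; linarith
  have cnt : ∀ c : ℕ, 1 ≤ c → ∃ K : ℝ, 0 < K ∧ ∀ y ρ : ℝ, 0 < ρ →
      nuC {ω | |XA (freeSet j N c) ω - y| ≤ ρ} ≤ ENNReal.ofReal (K * ρ ^ (d / 4)) := by
    intro c hc
    obtain ⟨K0, hK0, hF⟩ := freeSet_count (j := j) (N := N) hξ
      (fun i => by have := h.jpos i; omega) h.jN h.Nle
      (fun i => by have := h.sp i; nlinarith) hc (d := d / 4) (by linarith) hdξ'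
    exact nuC_interval_rpow (by linarith) hK0 hF
  obtain ⟨K1, hK1, hb1⟩ := cnt 1 le_rfl
  obtain ⟨K2, hK2, hb2⟩ := cnt 2 (by norm_num)
  refine ⟨K2 * (K1 * K1), by positivity, fun c ρ hρ => ?_⟩
  let y : (ℕ → Fin 2) × (ℕ → Fin 2) → ℝ := fun z =>
    c.2.2 - 1 / 4 - hc j N z + 2 * (c.2.1 * pc j N z.1 - c.1 * pc j N z.2)
  have hpm : Measurable (pc j N) := measurable_pc
  have hhm : Measurable (hc j N) := measurable_hc h
  have hym : Measurable y := by fun_prop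
  have hXm : Measurable (XA (freeSet j N 2)) := measurable_XA _
  let U : ℝ → Set (ℕ → Fin 2) := fun y => {ω | |XA (freeSet j N 1) ω - y| ≤ ρ}
  let T : Set (((ℕ → Fin 2) × (ℕ → Fin 2)) × (ℕ → Fin 2)) :=
    {w | w.1 ∈ U c.1 ×ˢ U c.2.1 ∧ |XA (freeSet j N 2) w.2 - y w.1| ≤ ρ ^ 2}
  have hUm : ∀ t, MeasurableSet (U t) := fun t =>
    measurableSet_le (((measurable_XA _).sub_const t).abs) measurable_const
  have hTm : MeasurableSet T := by
    apply MeasurableSet.inter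
    · exact ((hUm _).prod (hUm _)).preimage measurable_fst
    · exact measurableSet_le (f := fun w : ((ℕ → Fin 2) × (ℕ → Fin 2)) × (ℕ → Fin 2) =>
        |XA (freeSet j N 2) w.2 - y w.1|) (by fun_prop) measurable_const
  have hsub : PhiC j N ⁻¹' (Hball c ρ) ⊆ T := by
    intro w hw
    have hw' : Hnorm (Hmul (Hinv c) (PhiC j N w)) ≤ ρ := le_of_lt hw
    have a1 := abs_fst_le hw'
    have a2 := abs_snd_le hw'
    have a3 := abs_trd_le hw'
    simp only [Hmul, Hinv, PhiC] at a1 a2 a3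
    refine ⟨⟨?_, ?_⟩, ?_⟩
    · show |pc j N w.1.1 - c.1| ≤ ρ
      convert a1 using 2; ring
    · show |pc j N w.1.2 - c.2.1| ≤ ρ
      convert a2 using 2; ring
    · convert a3 using 2; simp only [y]; ring
  refine (measure_mono hsub).trans ?_
  unfold PC3
  rw [Measure.prod_apply hTm]
  have hsec : ∀ z, nuC (Prod.mk z ⁻¹' T) ≤ (U c.1 ×ˢ U c.2.1).indicator
      (fun _ => ENNReal.ofReal (K2 * (ρ ^ 2) ^ (d / 4))) z := by
    intro z
    by_cases hz : z ∈ U c.1 ×ˢ U c.2.1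
    · rw [Set.indicator_of_mem hz]
      refine (measure_mono ?_).trans (hb2 (y z) (ρ ^ 2) (by positivity))
      intro ω hω
      exact hω.2
    · rw [Set.indicator_of_notMem hz]
      have : Prod.mk z ⁻¹' T = ∅ := by
        ext ω
        constructor
        · intro hω; exact absurd hω.1 hz
        · intro hω; exact hω.elim
      rw [this, measure_empty]
  refine (lintegral_mono hsec).trans ?_
  rw [lintegral_indicator ((hUm _).prod (hUm _)), setLIntegral_const, Measure.prod_prod]
  calc _ ≤ ENNReal.ofReal (K2 * (ρ ^ 2) ^ (d / 4)) *
        (ENNReal.ofReal (K1 * ρ ^ (d / 4)) * ENNReal.ofReal (K1 * ρ ^ (d / 4))) := by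
        gcongr
        · exact hb1 _ _ hρ
        · exact hb1 _ _ hρ
    _ = _ := by
        rw [← ENNReal.ofReal_mul (by positivity), ← ENNReal.ofReal_mul (by positivity)]
        congr 1
        have : ρ ^ d = (ρ ^ 2) ^ (d / 4) * (ρ ^ (d / 4) * ρ ^ (d / 4)) := by
          rw [← Real.rpow_natCast ρ 2, ← Real.rpow_mul hρ.le, ← Real.rpow_add hρ, ← Real.rpow_add hρ]
          congr 1; push_cast; ring
        rw [this]; ring

lemma PhiC_Approximable {C : ℝ} (hC : 0 < C) {J mm : ℕ → ℕ} (hm : StrictMono mm) {N : ℕ → ℕ}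
    (h : Scales ξ (fun i => J (mm i)) N) {ξ' : ℝ} (hξ' : ξ' < ξ)
    (w : ((ℕ → Fin 2) × (ℕ → Fin 2)) × (ℕ → Fin 2)) :
    Approximable C J ξ' (PhiC (fun i => J (mm i)) N w) := by
  choose k hk using fun i => PhiC_approx h i w
  have t1 : Filter.Tendsto (fun i : ℕ => 4 * ((2 : ℝ) ^ (-(ξ - ξ'))) ^ i) Filter.atTop (nhds 0) := by
    simpa using (tendsto_pow_atTop_nhds_zero_of_lt_one (by positivity)
      (Real.rpow_lt_one_of_one_lt_of_neg (by norm_num : (1:ℝ) < 2)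
        (by linarith : -(ξ - ξ') < 0))).const_mul 4
  obtain ⟨I, hI⟩ := Filter.eventually_atTop.1 (t1.eventually_le_const hC)
  have hinj : Set.InjOn (fun i => (mm i, k i)) (Set.Ici I) := by
    intro a _ b _ hab
    exact hm.injective (Prod.ext_iff.1 hab).1
  refine Set.Infinite.mono ?_ ((Set.Ici_infinite I).image hinj)
  rintro _ ⟨i, hi, rfl⟩
  show Hdist _ (xjk (J (mm i) : ℤ) (k i)) ≤ C * (2 : ℝ) ^ (-(J (mm i) : ℝ) * ξ')
  refine (hk i).trans ?_
  have e1 : (1 : ℝ) / 2 ^ (N i) ≤ 2 ^ (-(ξ * J (mm i))) := by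
    rw [one_div, ← Real.rpow_natCast, ← Real.rpow_neg (by norm_num)]
    apply Real.rpow_le_rpow_of_exponent_le (by norm_num)
    have := h.leN i
    linarith
  have e2 : (2 : ℝ) ^ (-(ξ * J (mm i))) = 2 ^ (-(ξ - ξ') * J (mm i)) * 2 ^ (-(J (mm i) : ℝ) * ξ') := by
    rw [← Real.rpow_add (by norm_num)]; congr 1; ring
  have e3 : (2 : ℝ) ^ (-(ξ - ξ') * J (mm i)) ≤ ((2 : ℝ) ^ (-(ξ - ξ'))) ^ i := by
    rw [← Real.rpow_natCast, ← Real.rpow_mul (by norm_num)]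
    apply Real.rpow_le_rpow_of_exponent_le (by norm_num)
    have : (i : ℝ) ≤ J (mm i) := by
      have := h.jpos i
      exact_mod_cast (show i ≤ J (mm i) by omega)
    nlinarith
  calc 4 * (1 / 2 ^ N i : ℝ) ≤ 4 * (((2 : ℝ) ^ (-(ξ - ξ'))) ^ i * 2 ^ (-(J (mm i) : ℝ) * ξ')) := by
        gcongr
        refine e1.trans ?_
        rw [e2]
        gcongr
    _ = (4 * ((2 : ℝ) ^ (-(ξ - ξ'))) ^ i) * 2 ^ (-(J (mm i) : ℝ) * ξ') := by ring
    _ ≤ _ := by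
        gcongr
        exact hI i hi

end Construction

lemma SXiTilde_pos {C : ℝ} (hC : 0 < C) {J : ℕ → ℕ} (hJ : StrictMono J) {ξ : ℝ} (hξ : 1 ≤ ξ)
    {d : ℝ} (hd : 0 < d) (hdξ : d < 4 / ξ) : gaugeHausdorff d (SXiTilde C J ξ) ≠ 0 := by
  intro hzero
  obtain ⟨mm, hm, h⟩ := exists_scales hJ hξ
  set j : ℕ → ℕ := fun i => J (mm i) with hj
  set N : ℕ → ℕ := fun i => ⌈ξ * J (mm i)⌉₊ with hN
  have hnull : ∀ {d : ℝ}, 0 < d → d < 4 / ξ → ∀ {E : Set H3}, gaugeHausdorff d E = 0 →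
      PC3 (PhiC j N ⁻¹' E) = 0 := by
    intro d hd hdξ E hE
    obtain ⟨K, hK, hb⟩ := PC3_ball hξ h hd hdξ
    exact mass_distribution PC3 (PhiC j N) hd hb hE
  have h1 := hnull hd hdξ hzero
  have h2 : ∀ n : ℕ, PC3 (PhiC j N ⁻¹' (SXi C J (ξ + 1 / (n + 1)))) = 0 := by
    intro n
    have hp : (0 : ℝ) < 1 / (n + 1) := by positivity
    have hlt : 4 / (ξ + 1 / ((n : ℝ) + 1)) < 4 / ξ := by
      apply div_lt_div_of_pos_left <;> linarith
    obtain ⟨d', hd1, hd2⟩ := exists_between hlt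
    exact hnull (lt_trans (by positivity) hd1) hd2 (SXi_null hC hJ (by positivity) hd1)
  have h3 : (Set.univ : Set _) ⊆ PhiC j N ⁻¹' (SXiTilde C J ξ) ∪
      ⋃ n : ℕ, PhiC j N ⁻¹' (SXi C J (ξ + 1 / (n + 1))) := by
    intro w _
    by_cases hw : ∃ n : ℕ, PhiC j N w ∈ SXi C J (ξ + 1 / ((n : ℝ) + 1))
    · right; exact Set.mem_iUnion.2 hw
    · left
      push Not at hw
      have hmem := PhiC_mem h w
      refine ⟨hmem, ?_⟩
      unfold approxRate
      have hlow : ∀ ξ' < ξ, Approximable C J ξ' (PhiC j N w) := fun ξ' hξ' =>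
        PhiC_Approximable hC hm h hξ' w
      have hup : ∀ t ∈ {t : ℝ | 0 < t ∧ Approximable C J t (PhiC j N w)}, t ≤ ξ := by
        rintro t ⟨_, ht⟩
        by_contra hlt
        push Not at hlt
        obtain ⟨n, hn⟩ := exists_nat_one_div_lt (sub_pos.2 hlt)
        exact hw n ⟨hmem, Approximable_anti hC (by linarith) ht⟩
      apply csSup_eq_of_forall_le_of_forall_lt_exists_gt
      · exact ⟨1 / 2, by norm_num, hlow _ (by linarith)⟩
      · exact hup
      · intro t ht
        obtain ⟨s, hs1, hs2⟩ := exists_between (max_lt ht (by linarith : (0:ℝ) < ξ))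
        exact ⟨s, ⟨(le_max_right _ _).trans_lt hs1, hlow s hs2⟩, (le_max_left _ _).trans_lt hs1⟩
  have h4 : PC3 (Set.univ : Set _) ≤ 0 := by
    refine (measure_mono h3).trans ((measure_union_le _ _).trans ?_)
    rw [h1, measure_iUnion_null h2, add_zero]
  rw [measure_univ] at h4
  exact absurd h4 (by norm_num)

lemma gaugeDimH_eq {E : Set H3} {a : ℝ} (ha : 0 < a) (h1 : ∀ d, a < d → gaugeHausdorff d E = 0)
    (h2 : ∀ d, 0 < d → d < a → gaugeHausdorff d E ≠ 0) : gaugeDimH E = a := by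
  unfold gaugeDimH
  apply csInf_eq_of_forall_ge_of_forall_gt_exists_lt
  · exact ⟨a + 1, by linarith, h1 _ (by linarith)⟩
  · rintro d ⟨hd, hz⟩
    by_contra hlt
    exact h2 d hd (not_le.1 hlt) hz
  · intro t ht
    obtain ⟨s, hs1, hs2⟩ := exists_between ht
    exact ⟨s, ⟨by linarith, h1 s hs1⟩, hs2⟩

/-- For every strictly increasing sequence of positive integers `𝒥` and every
`ξ ≥ 1`, the Hausdorff dimensions (w.r.t. the gauge distance) of `S_ξ(𝒥)` and `S̃_ξ(𝒥)` are
both `4/ξ`. -/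
theorem heisenberg_dimension_approximable_sets
    (C : ℝ) (hC : 0 < C)
    (hcover : ∀ x : H3, ∀ j : ℕ, ∃ k : ℤ × ℤ × ℤ,
      Hdist x (xjk (j : ℤ) k) ≤ C * (2 : ℝ) ^ (-(j : ℤ)))
    (J : ℕ → ℕ) (hJmono : StrictMono J) (hJpos : ∀ m, 1 ≤ J m)
    (ξ : ℝ) (hξ : 1 ≤ ξ) :
    gaugeDimH (SXiTilde C J ξ) = 4 / ξ ∧ gaugeDimH (SXi C J ξ) = 4 / ξ := by
  have hξ0 : 0 < ξ := by linarith
  have ha : 0 < 4 / ξ := by positivity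
  constructor
  · apply gaugeDimH_eq ha
    · intro d hd
      have hd0 : 0 < d := ha.trans hd
      have hlt : 4 / d < ξ := by
        rw [div_lt_iff₀ hξ0] at hd
        rw [div_lt_iff₀ hd0]; linarith
      obtain ⟨ξ', h1, h2⟩ := exists_between hlt
      have hξ' : 0 < ξ' := lt_trans (by positivity) h1
      have hz : gaugeHausdorff d (SXi C J ξ') = 0 := by
        apply SXi_null hC hJmono hξ'
        rw [div_lt_iff₀ hd0] at h1
        rw [div_lt_iff₀ hξ']; linarith
      exact le_antisymm ((gaugeHausdorff_mono d (SXiTilde_subset hC hξ'.le h2)).trans hz.le) zero_le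
    · intro d h1 h2
      exact SXiTilde_pos hC hJmono hξ h1 h2
  · apply gaugeDimH_eq ha
    · intro d hd
      exact SXi_null hC hJmono hξ0 hd
    · intro d hd0 hd hz
      have hlt : ξ < 4 / d := by
        rw [lt_div_iff₀ hξ0] at hd
        rw [lt_div_iff₀ hd0]; linarith
      obtain ⟨ξ', h1, h2⟩ := exists_between hlt
      have hξ' : 0 < ξ' := hξ0.trans h1
      refine SXiTilde_pos hC hJmono (ξ := ξ') (by linarith) hd0 ?_ ?_
      · rw [lt_div_iff₀ hd0] at h2
        rw [lt_div_iff₀ hξ']; linarith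
      · exact le_antisymm ((gaugeHausdorff_mono d (SXiTilde_subset hC hξ0.le h1)).trans hz.le) zero_le
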